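/- Let A be a bounded operator on a Hilbert space with nonnegative imaginary part, i.e., Im A := (A - A*)/(2i) ≥ 0 (a dissipative operator), and assume A + η is invertible for all real η outside a null set. Let T be a Hilbert–Schmidt operator. Then there is a universal constant C such that for all t > 0, the Lebesgue measure of { η ∈ ℝ : ‖T (η + A)⁻¹ T‖_HS > t } is at most (C/t)·‖T‖_HS². -/

import Mathlib

open MeasureTheory
open scoped ENNReal InnerProductSpace

/-- The Hilbert–Schmidt norm of an operator, computed in a Hilbert basis `b`
(valued in `ℝ≥0∞`; it is `∞` when `T` is not Hilbert–Schmidt). -/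
noncomputable def hsNorm {H : Type*} [NormedAddCommGroup H] [InnerProductSpace ℂ H]
    {ι : Type*} (b : HilbertBasis ι ℂ H) (T : H →L[ℂ] H) : ℝ≥0∞ :=
  (∑' i, (‖T (b i)‖₊ : ℝ≥0∞) ^ 2) ^ (1 / 2 : ℝ)

section Helpers

open Filter Topology Set
open scoped Real

theorem isUnit_of_le_re_inner {H : Type*} [NormedAddCommGroup H] [InnerProductSpace ℂ H]
    [CompleteSpace H] {B : H →L[ℂ] H} {c : ℝ} (hc : 0 < c)
    (hB : ∀ x, c * ‖x‖ ^ 2 ≤ (⟪x, B x⟫_ℂ).re) : IsUnit B := by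
  refine B.isUnit_of_forall_le_norm_inner_map (c := ⟨c, hc.le⟩) hc fun x ↦ ?_
  rw [norm_inner_symm, mul_comm]
  exact (hB x).trans (Complex.re_le_norm _)

theorem isUnit_of_le_im_inner {H : Type*} [NormedAddCommGroup H] [InnerProductSpace ℂ H]
    [CompleteSpace H] {B : H →L[ℂ] H} {c : ℝ} (hc : 0 < c)
    (hB : ∀ x, c * ‖x‖ ^ 2 ≤ (⟪x, B x⟫_ℂ).im) : IsUnit B := by
  refine B.isUnit_of_forall_le_norm_inner_map (c := ⟨c, hc.le⟩) hc fun x ↦ ?_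
  rw [norm_inner_symm, mul_comm]
  exact (hB x).trans (Complex.im_le_norm _)

/-- The mean value property on a circle in the upper half-plane, parametrized by arc length from its
lowest point. -/
theorem integral_re_circleMap_eq {h : ℂ → ℂ} (hh : DifferentiableOn ℂ h {z | 0 < z.im})
    {r y : ℝ} (hr : 0 < r) (hy : r < y) :
    ∫ x in (-(π * r))..(π * r), (h (circleMap (y * Complex.I) r (x / r - π / 2))).re =
      2 * π * r * (h (y * Complex.I)).re := by
  have hsub : Metric.closedBall ((y : ℂ) * Complex.I) |r| ⊆ {z | 0 < z.im} := by
    intro z hz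
    have h1 := (Complex.abs_im_le_norm (z - y * Complex.I)).trans (by simpa [dist_eq_norm] using hz)
    rw [abs_of_pos hr] at h1
    have := (abs_le.1 h1).1
    simp at this ⊢
    linarith
  have hci : CircleIntegrable h (y * Complex.I) r :=
    ((hh.mono hsub).continuousOn.mono Metric.sphere_subset_closedBall).circleIntegrable'
  have hmean : Real.circleAverage h (y * Complex.I) r = h (y * Complex.I) :=
    DiffContOnCl.circleAverage ((hh.mono hsub).diffContOnCl_ball subset_rfl)
  have hre : Real.circleAverage (fun z ↦ (h z).re) (y * Complex.I) r = (h (y * Complex.I)).re := by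
    have := Complex.reCLM.circleAverage_comp_comm hci
    rw [hmean] at this
    exact this
  have hper : (fun θ ↦ (h (circleMap (y * Complex.I) r θ)).re).Periodic (2 * π) :=
    fun θ ↦ by simp [periodic_circleMap _ r θ]
  have h2 := hper.intervalIntegral_add_eq (-π - π / 2) 0
  rw [intervalIntegral.integral_comp_div_sub
    (fun θ ↦ (h (circleMap (y * Complex.I) r θ)).re) hr.ne']
  rw [← hre, Real.circleAverage_def, zero_add] at *
  rw [← h2]
  have e1 : -(π * r) / r - π / 2 = -π - π / 2 := by field_simp
  have e2 : π * r / r - π / 2 = -π - π / 2 + 2 * π := by field_simp; ring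
  rw [e1, e2]
  simp only [smul_eq_mul]
  field_simp

theorem circleMap_im_pos {r y : ℝ} (hr : 0 < r) (hy : r < y) (θ : ℝ) :
    0 < (circleMap (y * Complex.I) r θ).im := by
  have := Real.neg_one_le_sin θ
  simp [circleMap, Complex.exp_ofReal_mul_I_im]
  nlinarith

theorem tendsto_circleMap_ofReal (x : ℝ) :
    Tendsto (fun n : ℕ ↦ circleMap (((n + 1 + 1 / (n + 1) : ℝ) : ℂ) * Complex.I) (n + 1)
      (x / (n + 1) - π / 2)) atTop (𝓝 (x : ℂ)) := by
  have hε : Tendsto (fun n : ℕ ↦ (1 / ((n : ℝ) + 1))) atTop (𝓝 0) :=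
    tendsto_one_div_add_atTop_nhds_zero_nat
  have hε' : Tendsto (fun n : ℕ ↦ (1 / ((n : ℝ) + 1))) atTop (𝓝[≠] 0) :=
    tendsto_nhdsWithin_iff.2 ⟨hε, .of_forall fun n ↦ by simp; positivity⟩
  have hd : HasDerivAt (fun s : ℝ ↦ -Complex.I * Complex.exp ((s : ℂ) * (x * Complex.I)))
      (x : ℂ) 0 := by
    have h1 : HasDerivAt (fun s : ℝ ↦ (s : ℂ) * (x * Complex.I)) (x * Complex.I) 0 := by
      simpa using (Complex.ofRealCLM.hasDerivAt (x := (0 : ℝ))).mul_const (x * Complex.I)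
    refine (h1.cexp.const_mul (-Complex.I)).congr_deriv ?_
    rw [Complex.ofReal_zero, zero_mul, Complex.exp_zero, one_mul]
    linear_combination (-(x : ℂ)) * Complex.I_mul_I
  have h3 := (hasDerivAt_iff_tendsto_slope_zero.1 hd).comp hε'
  have h4 := h3.add ((Complex.continuous_ofReal.tendsto 0).comp hε |>.mul_const Complex.I)
  simp only [Complex.ofReal_zero, zero_mul, add_zero] at h4
  refine h4.congr fun n ↦ ?_
  have hn : (n : ℂ) + 1 ≠ 0 := by exact_mod_cast Nat.succ_ne_zero n
  have he : Complex.exp (((x / (n + 1) - π / 2 : ℝ) : ℂ) * Complex.I) =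
      -Complex.I * Complex.exp (((1 / ((n : ℝ) + 1) : ℝ) : ℂ) * (x * Complex.I)) := by
    have : (((x / (n + 1) - π / 2 : ℝ) : ℂ) * Complex.I) =
      -(π / 2 * Complex.I) + (((1 / ((n : ℝ) + 1) : ℝ) : ℂ) * (x * Complex.I)) := by
      push_cast; ring
    rw [this, Complex.exp_add, Complex.exp_neg, Complex.exp_pi_div_two_mul_I]
    simp
  rw [circleMap, he]
  simp
  field_simp
  ring

/-- If `re h ≤ K / y` on the imaginary axis of the upper half-plane, then every nonnegative minorant
of `re h` that is continuous up to almost every boundary point has boundary integral at most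
`2πK`. -/
theorem lintegral_boundary_le {h : ℂ → ℂ} (hh : DifferentiableOn ℂ h {z | 0 < z.im})
    {q : ℂ → ℝ} (hq : ContinuousOn q {z | 0 < z.im}) (hqh : ∀ z : ℂ, 0 < z.im → q z ≤ (h z).re)
    (hq0 : ∀ z, 0 ≤ q z) (hqx : ∀ᵐ x : ℝ, ContinuousAt q (x : ℂ)) {K : ℝ}
    (hK : ∀ y : ℝ, 0 < y → (h (y * Complex.I)).re ≤ K / y) :
    AEMeasurable (fun x : ℝ ↦ ENNReal.ofReal (q x)) ∧
      ∫⁻ x : ℝ, ENNReal.ofReal (q x) ≤ ENNReal.ofReal (2 * π * K) := by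
  set r : ℕ → ℝ := fun n ↦ n + 1 with hrdef
  set y : ℕ → ℝ := fun n ↦ n + 1 + 1 / (n + 1) with hydef
  have hr : ∀ n, 0 < r n := fun n ↦ by positivity
  have hy : ∀ n, r n < y n := fun n ↦ by
    have : (0 : ℝ) < 1 / (n + 1) := by positivity
    simp only [hrdef, hydef]; linarith
  set Z : ℕ → ℝ → ℂ := fun n x ↦ circleMap (y n * Complex.I) (r n) (x / r n - π / 2) with hZ
  have hZc : ∀ n, Continuous (Z n) := fun n ↦ (continuous_circleMap _ _).comp (by fun_prop)
  have hZi : ∀ n x, 0 < (Z n x).im := fun n x ↦ circleMap_im_pos (hr n) (hy n) _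
  have hqc : ∀ n, Continuous fun x ↦ q (Z n x) := fun n ↦
    hq.comp_continuous (hZc n) (hZi n)
  have hhc : ∀ n, Continuous fun x ↦ (h (Z n x)).re := fun n ↦
    Complex.continuous_re.comp (hh.continuousOn.comp_continuous (hZc n) (hZi n))
  set F : ℕ → ℝ → ℝ≥0∞ := fun n ↦
    (Ioc (-(π * r n)) (π * r n)).indicator fun x ↦ ENNReal.ofReal (q (Z n x)) with hF
  have hFm : ∀ n, Measurable (F n) := fun n ↦
    (hqc n).measurable.ennreal_ofReal.indicator measurableSet_Ioc
  have hlim : ∀ᵐ x : ℝ, Tendsto (fun n ↦ F n x) atTop (𝓝 (ENNReal.ofReal (q x))) := by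
    filter_upwards [hqx] with x hx
    have h1 : Tendsto (fun n ↦ ENNReal.ofReal (q (Z n x))) atTop (𝓝 (ENNReal.ofReal (q x))) :=
      ENNReal.tendsto_ofReal (hx.tendsto.comp (by
        have := tendsto_circleMap_ofReal x
        simpa [hZ, hydef, hrdef] using this))
    refine h1.congr' ?_
    filter_upwards [eventually_ge_atTop ⌈|x|⌉₊] with n hn
    have h2 : |x| ≤ n := (Nat.le_ceil _).trans (by exact_mod_cast hn)
    have h3 := abs_le.1 h2
    have h4 : r n ≤ π * r n := by nlinarith [Real.pi_gt_three, hr n]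
    have : x ∈ Ioc (-(π * r n)) (π * r n) := by
      simp only [hrdef] at h4 ⊢
      constructor <;> linarith
    simp [hF, this]
  have hbd : ∀ n, ∫⁻ x, F n x ≤ ENNReal.ofReal (2 * π * K) := fun n ↦ by
    have hle : -(π * r n) ≤ π * r n := by
      have : 0 < π * r n := mul_pos Real.pi_pos (hr n)
      linarith
    have hy0 : 0 < y n := (hr n).trans (hy n)
    calc ∫⁻ x, F n x = ∫⁻ x in Ioc (-(π * r n)) (π * r n), ENNReal.ofReal (q (Z n x)) :=
          lintegral_indicator measurableSet_Ioc _
      _ ≤ ∫⁻ x in Ioc (-(π * r n)) (π * r n), ENNReal.ofReal ((h (Z n x)).re) :=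
          lintegral_mono fun x ↦ ENNReal.ofReal_le_ofReal (hqh _ (hZi n x))
      _ = ENNReal.ofReal (∫ x in (-(π * r n))..(π * r n), (h (Z n x)).re) := by
          rw [intervalIntegral.integral_of_le hle, ofReal_integral_eq_lintegral_ofReal]
          · exact (intervalIntegrable_iff_integrableOn_Ioc_of_le hle).1
              ((hhc n).intervalIntegrable _ _)
          · exact .of_forall fun x ↦ (hq0 _).trans (hqh _ (hZi n x))
      _ ≤ ENNReal.ofReal (2 * π * K) := by
          rw [integral_re_circleMap_eq hh (hr n) (hy n)]
          apply ENNReal.ofReal_le_ofReal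
          have h1 := hK _ hy0
          have h0 : 0 ≤ (h (y n * Complex.I)).re := (hq0 _).trans (hqh _ (by simpa using hy0))
          have h2 : r n * (h (y n * Complex.I)).re ≤ K := by
            rw [le_div_iff₀ hy0] at h1
            nlinarith [hy n]
          nlinarith [Real.pi_pos]
  refine ⟨aemeasurable_of_tendsto_metrizable_ae' (fun n ↦ (hFm n).aemeasurable) hlim, ?_⟩
  calc ∫⁻ x : ℝ, ENNReal.ofReal (q x) = ∫⁻ x, liminf (fun n ↦ F n x) atTop :=
        lintegral_congr_ae (by filter_upwards [hlim] with x hx using hx.liminf_eq.symm)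
    _ ≤ liminf (fun n ↦ ∫⁻ x, F n x) atTop := lintegral_liminf_le hFm
    _ ≤ ENNReal.ofReal (2 * π * K) := liminf_le_of_le (by isBoundedDefault)
        fun b hb ↦ (hb.exists.choose_spec).trans (hbd _)

section
variable {H : Type*} [NormedAddCommGroup H] [InnerProductSpace ℂ H]

theorem inner_smul_one_add_apply_im (B : H →L[ℂ] H) (z : ℂ) (x : H) :
    (⟪x, (z • (1 : H →L[ℂ] H) + B) x⟫_ℂ).im = z.im * ‖x‖ ^ 2 + (⟪x, B x⟫_ℂ).im := by
  have : ⟪x, x⟫_ℂ = ((‖x‖ ^ 2 : ℝ) : ℂ) := by simp [inner_self_eq_norm_sq_to_K]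
  simp only [add_apply, smul_apply, one_apply_eq_self, inner_add_right, inner_smul_right,
    this, Complex.add_im, Complex.im_mul_ofReal]

theorem isUnit_smul_one_add_of_im_pos [CompleteSpace H]
    {B : H →L[ℂ] H} (hB : ∀ x, 0 ≤ (⟪x, B x⟫_ℂ).im) {z : ℂ}
    (hz : 0 < z.im) : IsUnit (z • (1 : H →L[ℂ] H) + B) :=
  isUnit_of_le_im_inner hz fun x ↦ by
    rw [inner_smul_one_add_apply_im]
    linarith [hB x]

theorem inverse_apply_self {X : H →L[ℂ] H} (hX : IsUnit X) (w : H) : X (Ring.inverse X w) = w :=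
  DFunLike.congr_fun (Ring.mul_inverse_cancel X hX) w

theorem re_I_mul_inner_inverse {X : H →L[ℂ] H} (hX : IsUnit X) (w : H) :
    (Complex.I * ⟪w, Ring.inverse X w⟫_ℂ).re = (⟪Ring.inverse X w, X (Ring.inverse X w)⟫_ℂ).im := by
  rw [inverse_apply_self hX, ← inner_conj_symm w, Complex.I_mul_re, Complex.conj_im, neg_neg]

/-- Kato smoothness of `T` with respect to a dissipative operator whose imaginary part dominates
`s • (adjoint T ∘L T)`. -/
theorem lintegral_norm_resolvent_sq_le [CompleteSpace H]
    {B T : H →L[ℂ] H} {s : ℝ} (hs : 0 < s)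
    (hB : ∀ x, s * ‖T x‖ ^ 2 ≤ (⟪x, B x⟫_ℂ).im)
    (hu : ∀ᵐ x : ℝ, IsUnit ((x : ℂ) • (1 : H →L[ℂ] H) + B)) (w : H) :
    AEMeasurable (fun x : ℝ ↦
        (‖T (Ring.inverse ((x : ℂ) • (1 : H →L[ℂ] H) + B) w)‖₊ : ℝ≥0∞) ^ 2) ∧
      ∫⁻ x : ℝ, (‖T (Ring.inverse ((x : ℂ) • (1 : H →L[ℂ] H) + B) w)‖₊ : ℝ≥0∞) ^ 2 ≤
        ENNReal.ofReal (2 * π / s) * (‖w‖₊ : ℝ≥0∞) ^ 2 := by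
  have hB0 : ∀ x, 0 ≤ (⟪x, B x⟫_ℂ).im := fun x ↦ le_trans (by positivity) (hB x)
  have hunit : ∀ z : ℂ, 0 < z.im → IsUnit (z • (1 : H →L[ℂ] H) + B) := fun z ↦
    isUnit_smul_one_add_of_im_pos hB0
  have hdiff : ∀ z : ℂ, IsUnit (z • (1 : H →L[ℂ] H) + B) → DifferentiableAt ℂ
      (fun z : ℂ ↦ Ring.inverse (z • (1 : H →L[ℂ] H) + B)) z := fun z hz ↦
    DifferentiableAt.inverse (by fun_prop) hz
  have hcont : ∀ z : ℂ, IsUnit (z • (1 : H →L[ℂ] H) + B) → ContinuousAt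
      (fun z : ℂ ↦ ‖T (Ring.inverse (z • (1 : H →L[ℂ] H) + B) w)‖ ^ 2) z := fun z hz ↦
    (T.continuous.continuousAt.comp ((hdiff z hz).continuousAt.clm_apply
      continuousAt_const)).norm.pow 2
  have key : ∀ z : ℂ, 0 < z.im →
      (Complex.I / s * ⟪w, Ring.inverse (z • (1 : H →L[ℂ] H) + B) w⟫_ℂ).re =
      (z.im * ‖Ring.inverse (z • (1 : H →L[ℂ] H) + B) w‖ ^ 2 +
        (⟪Ring.inverse (z • (1 : H →L[ℂ] H) + B) w,
          B (Ring.inverse (z • (1 : H →L[ℂ] H) + B) w)⟫_ℂ).im) / s := fun z hz ↦ by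
    rw [div_mul_eq_mul_div, Complex.div_ofReal_re, re_I_mul_inner_inverse (hunit z hz),
      inner_smul_one_add_apply_im]
  have main := lintegral_boundary_le
    (h := fun z ↦ Complex.I / s * ⟪w, Ring.inverse (z • (1 : H →L[ℂ] H) + B) w⟫_ℂ)
    (q := fun z ↦ ‖T (Ring.inverse (z • (1 : H →L[ℂ] H) + B) w)‖ ^ 2) (K := ‖w‖ ^ 2 / s)
    (fun z hz ↦ (DifferentiableAt.const_mul (((innerSL ℂ w).differentiableAt).comp z
      ((hdiff z (hunit z hz)).clm_apply (differentiableAt_const w))) _).differentiableWithinAt)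
    (fun z hz ↦ (hcont z (hunit z hz)).continuousWithinAt)
    (fun z hz ↦ by
      rw [key z hz, le_div_iff₀ hs, mul_comm]
      exact (hB _).trans (le_add_of_nonneg_left (mul_nonneg hz.le (sq_nonneg _))))
    (fun z ↦ sq_nonneg _) (hu.mono fun x hx ↦ hcont _ hx)
    (fun y hy ↦ by
      have hz : 0 < ((y : ℂ) * Complex.I).im := by simpa using hy
      have h1 := re_I_mul_inner_inverse (hunit _ hz) w
      rw [div_mul_eq_mul_div, Complex.div_ofReal_re]
      rw [inner_smul_one_add_apply_im] at h1
      have h2 := norm_inner_le_norm (𝕜 := ℂ) w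
        (Ring.inverse (((y : ℂ) * Complex.I) • (1 : H →L[ℂ] H) + B) w)
      have h3 := Complex.re_le_norm (Complex.I *
        ⟪w, Ring.inverse (((y : ℂ) * Complex.I) • (1 : H →L[ℂ] H) + B) w⟫_ℂ)
      rw [norm_mul, Complex.norm_I, one_mul] at h3
      set u := Ring.inverse (((y : ℂ) * Complex.I) • (1 : H →L[ℂ] H) + B) w
      have h4 := hB0 u
      simp only [Complex.mul_im, Complex.ofReal_re, Complex.I_im, mul_one, Complex.ofReal_im,
        Complex.I_re, mul_zero, add_zero] at h1
      have h5 : y * ‖u‖ ≤ ‖w‖ := by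
        by_contra! hlt
        have : 0 < ‖u‖ := by
          by_contra! h0
          nlinarith [norm_nonneg w, norm_nonneg u]
        nlinarith
      rw [div_right_comm]
      gcongr
      rw [le_div_iff₀ hy]
      nlinarith [norm_nonneg w, h3.trans h2])
  have e : ∀ v : H, ENNReal.ofReal (‖v‖ ^ 2) = (‖v‖₊ : ℝ≥0∞) ^ 2 := fun v ↦ by
    rw [ENNReal.ofReal_pow (norm_nonneg v), ofReal_norm, enorm_eq_nnnorm]
  simp only [e] at main
  refine ⟨main.1, main.2.trans_eq ?_⟩
  rw [← e, ← ENNReal.ofReal_mul (by positivity)]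
  congr 1
  ring

theorem isUnit_add_smul_adjoint_comp [CompleteSpace H]
    {X T : H →L[ℂ] H} (hX : IsUnit X)
    (him : ∀ x, 0 ≤ (⟪x, X x⟫_ℂ).im) {s : ℝ} (hs : 0 ≤ s) :
    IsUnit (X + (Complex.I * s) • (ContinuousLinearMap.adjoint T ∘L T)) := by
  set a : H →L[ℂ] H := -(Complex.I * s) • (Ring.inverse X * ContinuousLinearMap.adjoint T) with ha
  have h1 : IsUnit (1 - T * a) := by
    refine isUnit_of_le_re_inner one_pos fun x ↦ ?_
    have h2 := re_I_mul_inner_inverse hX (ContinuousLinearMap.adjoint T x)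
    have h3 := him (Ring.inverse X (ContinuousLinearMap.adjoint T x))
    have h5 : ⟪x, x⟫_ℂ = ((‖x‖ ^ 2 : ℝ) : ℂ) := by simp [inner_self_eq_norm_sq_to_K]
    have h4 : ⟪x, (1 - T * a) x⟫_ℂ = ((‖x‖ ^ 2 : ℝ) : ℂ) + s * (Complex.I *
        ⟪ContinuousLinearMap.adjoint T x, Ring.inverse X (ContinuousLinearMap.adjoint T x)⟫_ℂ) := by
      rw [← h5, ContinuousLinearMap.adjoint_inner_left]
      simp [ha]
      ring
    rw [h4, Complex.add_re, Complex.re_ofReal_mul, h2, Complex.ofReal_re]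
    nlinarith [mul_nonneg hs h3]
  have h2 : IsUnit (1 - a * T) := by
    have := (spectrum.unit_mem_mul_comm (R := ℂ) (a := T) (b := a) (r := 1)).not
    simp only [spectrum.notMem_iff, Units.val_one, map_one] at this
    exact this.1 h1
  have h3 : X + (Complex.I * s) • (ContinuousLinearMap.adjoint T ∘L T) = X * (1 - a * T) := by
    have := Ring.mul_inverse_cancel X hX
    rw [ha, mul_sub, smul_mul_assoc, mul_smul_comm, ← mul_assoc, ← mul_assoc, this]
    simp [ContinuousLinearMap.mul_def]
  rw [h3]
  exact hX.mul h2

/-- The second resolvent identity. -/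
theorem inverse_eq_inverse_add_smul_mul {X : H →L[ℂ] H} (hX : IsUnit X) {k : ℂ} {D : H →L[ℂ] H}
    (hXD : IsUnit (X + k • D)) :
    Ring.inverse X =
      Ring.inverse (X + k • D) + k • (Ring.inverse (X + k • D) * D * Ring.inverse X) := by
  have h1 := Ring.mul_inverse_cancel X hX
  have h2 := Ring.inverse_mul_cancel _ hXD
  calc Ring.inverse X = Ring.inverse (X + k • D) * (X + k • D) * Ring.inverse X := by
        rw [h2, one_mul]
    _ = _ := by
        rw [mul_add, add_mul, mul_assoc, h1, mul_one, mul_smul_comm, smul_mul_assoc]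

end

section
variable {H : Type*} [NormedAddCommGroup H] [InnerProductSpace ℂ H]
  {ι : Type*} (b : HilbertBasis ι ℂ H)

theorem hsNorm_sq (T : H →L[ℂ] H) : hsNorm b T ^ 2 = ∑' i, (‖T (b i)‖₊ : ℝ≥0∞) ^ 2 := by
  rw [hsNorm, ← ENNReal.rpow_natCast, ← ENNReal.rpow_mul]
  norm_num

theorem tsum_nnnorm_inner_sq (v : H) :
    ∑' i, (‖⟪b i, v⟫_ℂ‖₊ : ℝ≥0∞) ^ 2 = (‖v‖₊ : ℝ≥0∞) ^ 2 := by
  have h1 : HasSum (fun i ↦ ‖⟪b i, v⟫_ℂ‖ ^ 2) (‖v‖ ^ 2) := by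
    have := (Complex.reCLM.hasSum (b.hasSum_inner_mul_inner v v))
    simp only [Complex.reCLM_apply] at this
    convert this using 1
    · ext i
      rw [← inner_conj_symm v, mul_comm, Complex.mul_conj, Complex.ofReal_re,
        Complex.normSq_eq_norm_sq]
    · exact (inner_self_eq_norm_sq (𝕜 := ℂ) v).symm
  have h2 : HasSum (fun i ↦ ‖⟪b i, v⟫_ℂ‖₊ ^ 2) (‖v‖₊ ^ 2) := by
    rw [← NNReal.hasSum_coe]
    simpa using h1
  simpa using (ENNReal.hasSum_coe.2 h2).tsum_eq

theorem hsNorm_adjoint [CompleteSpace H] (T : H →L[ℂ] H) :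
    hsNorm b (ContinuousLinearMap.adjoint T) = hsNorm b T := by
  have (i j : ι) : ‖⟪b j, ContinuousLinearMap.adjoint T (b i)⟫_ℂ‖₊ = ‖⟪b i, T (b j)⟫_ℂ‖₊ := by
    rw [ContinuousLinearMap.adjoint_inner_right, ← inner_conj_symm, RCLike.nnnorm_conj]
  simp only [hsNorm]
  congr 1
  simp_rw [← tsum_nnnorm_inner_sq b (T _),
    ← tsum_nnnorm_inner_sq b (ContinuousLinearMap.adjoint T _), this]
  exact ENNReal.tsum_comm

theorem nnnorm_apply_le_hsNorm [CompleteSpace H] (T : H →L[ℂ] H) (v : H) :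
    (‖T v‖₊ : ℝ≥0∞) ≤ hsNorm b T * ‖v‖₊ := by
  rw [← ENNReal.pow_le_pow_left_iff two_ne_zero, mul_pow, ← hsNorm_adjoint, hsNorm_sq,
    ← tsum_nnnorm_inner_sq b (T v), ← ENNReal.tsum_mul_right]
  refine ENNReal.tsum_le_tsum fun i ↦ ?_
  rw [← mul_pow, ← ContinuousLinearMap.adjoint_inner_left]
  gcongr
  exact_mod_cast nnnorm_inner_le_nnnorm (𝕜 := ℂ) _ _

theorem hsNorm_le_of_forall_norm_le {X Y : H →L[ℂ] H} {c : ℝ≥0∞}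
    (h : ∀ i, (‖X (b i)‖₊ : ℝ≥0∞) ≤ c * ‖Y (b i)‖₊) : hsNorm b X ≤ c * hsNorm b Y := by
  rw [← ENNReal.pow_le_pow_left_iff two_ne_zero, mul_pow, hsNorm_sq, hsNorm_sq,
    ← ENNReal.tsum_mul_left]
  refine ENNReal.tsum_le_tsum fun i ↦ ?_
  rw [← mul_pow]
  gcongr
  exact h i

theorem volume_hsNorm_comp_resolvent_comp_ge_le [CompleteSpace H] {B T : H →L[ℂ] H} {s : ℝ}
    (hs : 0 < s) (hB : ∀ x, s * ‖T x‖ ^ 2 ≤ (⟪x, B x⟫_ℂ).im)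
    (hu : ∀ᵐ x : ℝ, IsUnit ((x : ℂ) • (1 : H →L[ℂ] H) + B)) {X : H →L[ℂ] H}
    (hX : hsNorm b X ≠ ∞) {c : ℝ} (hc : 0 < c) :
    volume {x : ℝ | ENNReal.ofReal c ≤
        hsNorm b (T ∘L Ring.inverse ((x : ℂ) • (1 : H →L[ℂ] H) + B) ∘L X)} ≤
      ENNReal.ofReal (2 * π / (s * c ^ 2)) * hsNorm b X ^ 2 := by
  have hsum : ∑' i, (‖X (b i)‖₊ : ℝ≥0∞) ^ 2 ≠ ∞ := by
    rw [← hsNorm_sq]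
    exact ENNReal.pow_ne_top hX
  set J := Function.support fun i ↦ (‖X (b i)‖₊ : ℝ≥0∞) ^ 2
  have : Countable J := (Summable.countable_support_ennreal hsum).to_subtype
  have hK := fun i ↦ lintegral_norm_resolvent_sq_le hs hB hu (X (b i))
  have hJ : ∀ x : ℝ, hsNorm b (T ∘L Ring.inverse ((x : ℂ) • (1 : H →L[ℂ] H) + B) ∘L X) ^ 2 =
      ∑' i : J, (‖T (Ring.inverse ((x : ℂ) • (1 : H →L[ℂ] H) + B) (X (b i)))‖₊ : ℝ≥0∞) ^ 2 := by
    intro x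
    rw [hsNorm_sq]
    refine (tsum_subtype_eq_of_support_subset fun i hi ↦ ?_).symm
    contrapose! hi
    have : X (b i) = 0 := by simpa [J] using hi
    simp [this]
  have hset : {x : ℝ | ENNReal.ofReal c ≤
      hsNorm b (T ∘L Ring.inverse ((x : ℂ) • (1 : H →L[ℂ] H) + B) ∘L X)} =
      {x : ℝ | ENNReal.ofReal (c ^ 2) ≤ ∑' i : J,
        (‖T (Ring.inverse ((x : ℂ) • (1 : H →L[ℂ] H) + B) (X (b i)))‖₊ : ℝ≥0∞) ^ 2} := by
    ext x
    rw [mem_ofPred_eq, mem_ofPred_eq, ← hJ, ENNReal.ofReal_pow hc.le,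
      ENNReal.pow_le_pow_left_iff two_ne_zero]
  rw [hset]
  refine (meas_ge_le_lintegral_div (AEMeasurable.tsum fun i : J ↦ (hK i).1)
    (by simpa using by positivity) ENNReal.ofReal_ne_top).trans ?_
  rw [lintegral_tsum fun i : J ↦ (hK i).1]
  refine ENNReal.div_le_of_le_mul ?_
  calc _ ≤ ∑' i : J, ENNReal.ofReal (2 * π / s) * (‖X (b i)‖₊ : ℝ≥0∞) ^ 2 :=
        ENNReal.tsum_le_tsum fun i ↦ (hK i).2
    _ = ENNReal.ofReal (2 * π / s) * hsNorm b X ^ 2 := by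
        rw [ENNReal.tsum_mul_left, hsNorm_sq, tsum_subtype_support]
    _ = _ := by
        rw [mul_right_comm, ← ENNReal.ofReal_mul (by positivity)]
        congr 2
        field_simp

theorem hsNorm_comp_inverse_comp_le [CompleteSpace H] {X T : H →L[ℂ] H} (hX : IsUnit X) {t : ℝ}
    (ht : 0 < t)
    (hXT : IsUnit (X + (Complex.I * (t⁻¹ : ℝ)) • (ContinuousLinearMap.adjoint T ∘L T)))
    (h : hsNorm b (T ∘L
        Ring.inverse (X + (Complex.I * (t⁻¹ : ℝ)) • (ContinuousLinearMap.adjoint T ∘L T)) ∘L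
        ContinuousLinearMap.adjoint T) ≤ ENNReal.ofReal (t / 2)) :
    hsNorm b (T ∘L Ring.inverse X ∘L T) ≤ 2 * hsNorm b (T ∘L
        Ring.inverse (X + (Complex.I * (t⁻¹ : ℝ)) • (ContinuousLinearMap.adjoint T ∘L T)) ∘L
        T) := by
  refine hsNorm_le_of_forall_norm_le b fun i ↦ ?_
  have hR := inverse_eq_inverse_add_smul_mul hX hXT
  set S := Ring.inverse (X + (Complex.I * (t⁻¹ : ℝ)) • (ContinuousLinearMap.adjoint T ∘L T))
  set v := T (Ring.inverse X (T (b i))) with hv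
  have hv' : v = T (S (T (b i))) +
      (Complex.I * (t⁻¹ : ℝ)) • T (S (ContinuousLinearMap.adjoint T v)) := by
    rw [hv]
    conv_lhs => rw [hR]
    simp
  have h1 := (nnnorm_apply_le_hsNorm b _ v).trans (mul_le_mul_left h _)
  have h2 : ‖T (S (ContinuousLinearMap.adjoint T v))‖ ≤ t / 2 * ‖v‖ := by
    rw [← enorm_eq_nnnorm, ← enorm_eq_nnnorm, ← ofReal_norm, ← ofReal_norm,
      ← ENNReal.ofReal_mul (by positivity), ENNReal.ofReal_le_ofReal_iff (by positivity)] at h1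
    exact h1
  have h3 : ‖v‖ ≤ 2 * ‖T (S (T (b i)))‖ := by
    have h4 := norm_add_le (T (S (T (b i))))
      ((Complex.I * (t⁻¹ : ℝ)) • T (S (ContinuousLinearMap.adjoint T v)))
    rw [← hv', norm_smul, norm_mul, Complex.norm_I, one_mul, Complex.norm_real,
      Real.norm_of_nonneg (by positivity)] at h4
    have h5 : t⁻¹ * ‖T (S (ContinuousLinearMap.adjoint T v))‖ ≤ ‖v‖ / 2 :=
      (mul_le_mul_of_nonneg_left h2 (by positivity)).trans_eq (by field_simp)
    linarith
  exact_mod_cast h3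

end

end Helpers

/-- weak 1-1 bound of Naboko. There is a universal constant `C > 0` such
that for every Hilbert space, every bounded dissipative operator `A` (i.e. `Im A ≥ 0`)
with `A + η` invertible for a.e. real `η`, and every Hilbert–Schmidt operator `T`, the
Lebesgue measure of `{η ∈ ℝ : ‖T (η + A)⁻¹ T‖_HS > t}` is at most `(C/t)·‖T‖_HS²`. -/
theorem weak_one_one_bound_dissipative :
    ∃ C : ℝ, 0 < C ∧
      ∀ (H : Type) [NormedAddCommGroup H] [InnerProductSpace ℂ H] [CompleteSpace H]
        (ι : Type) (b : HilbertBasis ι ℂ H) (A T : H →L[ℂ] H),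
        (∀ x : H, 0 ≤ (⟪x, A x⟫_ℂ).im) →
        (∀ᵐ η : ℝ, IsUnit ((η : ℂ) • (1 : H →L[ℂ] H) + A)) →
        hsNorm b T < ∞ →
        ∀ t : ℝ, 0 < t →
          volume {η : ℝ |
              ENNReal.ofReal t <
                hsNorm b (T ∘L Ring.inverse ((η : ℂ) • (1 : H →L[ℂ] H) + A) ∘L T)} ≤
            ENNReal.ofReal (C / t) * (hsNorm b T) ^ 2 := by
  refine ⟨16 * Real.pi, by positivity, fun H _ _ _ ι b A T hA hu hT t ht ↦ ?_⟩
  set B : H →L[ℂ] H := A + (Complex.I * (t⁻¹ : ℝ)) • (ContinuousLinearMap.adjoint T ∘L T) with hB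
  have hBim : ∀ x, t⁻¹ * ‖T x‖ ^ 2 ≤ (⟪x, B x⟫_ℂ).im := fun x ↦ by
    have h1 : ⟪T x, T x⟫_ℂ = ((‖T x‖ ^ 2 : ℝ) : ℂ) := by simp [inner_self_eq_norm_sq_to_K]
    have h2 : ⟪x, B x⟫_ℂ = ⟪x, A x⟫_ℂ + Complex.I * (t⁻¹ * ‖T x‖ ^ 2 : ℝ) := by
      rw [Complex.ofReal_mul, ← h1, hB, add_apply,
        smul_apply, inner_add_right, inner_smul_right,
        ContinuousLinearMap.comp_apply, ContinuousLinearMap.adjoint_inner_right, mul_assoc]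
    rw [h2, Complex.add_im, Complex.I_mul_im, Complex.ofReal_re]
    linarith [hA x]
  have hBu : ∀ η : ℝ, IsUnit ((η : ℂ) • (1 : H →L[ℂ] H) + A) →
      IsUnit ((η : ℂ) • (1 : H →L[ℂ] H) + B) := fun η hη ↦ by
    rw [hB, ← add_assoc]
    refine isUnit_add_smul_adjoint_comp hη (fun x ↦ ?_) (by positivity)
    rw [inner_smul_one_add_apply_im, Complex.ofReal_im, zero_mul, zero_add]
    exact hA x
  have key : ∀ {X : H →L[ℂ] H}, hsNorm b X = hsNorm b T → volume {η : ℝ | ENNReal.ofReal (t / 2) ≤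
      hsNorm b (T ∘L Ring.inverse ((η : ℂ) • (1 : H →L[ℂ] H) + B) ∘L X)} ≤
      ENNReal.ofReal (8 * Real.pi / t) * hsNorm b T ^ 2 := fun {X} hX ↦ by
    have := volume_hsNorm_comp_resolvent_comp_ge_le b (inv_pos.2 ht) hBim (hu.mono hBu) (X := X)
      (by rw [hX]; exact hT.ne) (half_pos ht)
    rw [hX] at this
    convert this using 3
    field_simp
    ring
  calc _ ≤ volume ({η : ℝ | ENNReal.ofReal (t / 2) ≤
          hsNorm b (T ∘L Ring.inverse ((η : ℂ) • (1 : H →L[ℂ] H) + B) ∘L T)} ∪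
        {η : ℝ | ENNReal.ofReal (t / 2) ≤ hsNorm b (T ∘L
          Ring.inverse ((η : ℂ) • (1 : H →L[ℂ] H) + B) ∘L ContinuousLinearMap.adjoint T)}) := by
        refine measure_mono_ae ?_
        filter_upwards [hu] with η hη hlt
        by_contra hnot
        obtain ⟨h1, h2⟩ := not_or.1 hnot
        rw [Set.mem_ofPred_eq, not_le] at h1 h2
        have hXT := hBu η hη
        rw [hB, ← add_assoc] at hXT h1 h2
        refine absurd (hlt.trans_le (hsNorm_comp_inverse_comp_le b hη ht hXT h2.le)) (not_lt.2 ?_)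
        calc _ ≤ 2 * ENNReal.ofReal (t / 2) := by gcongr
          _ = ENNReal.ofReal t := by
            rw [← ENNReal.ofReal_ofNat 2, ← ENNReal.ofReal_mul two_pos.le]
            congr 1
            ring
    _ ≤ ENNReal.ofReal (8 * Real.pi / t) * hsNorm b T ^ 2 +
        ENNReal.ofReal (8 * Real.pi / t) * hsNorm b T ^ 2 :=
      (measure_union_le _ _).trans (add_le_add (key rfl) (key (hsNorm_adjoint b T)))
    _ = _ := by
      rw [← add_mul, ← ENNReal.ofReal_add (by positivity) (by positivity)]
      congr 2
      ring
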